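/- Let X ∈ ℂ^{T×M} satisfy the RIP of order s with constant δ_s ∈ [0,1) and of order s+1 with constant δ_{s+1} ∈ [0,1). Let Ω ⊆ {1,…,M} with |Ω| ≤ s, let J ⊆ Ω, and let j ∈ {1,…,M} \ Ω. Let P_J = X_J ((X_J)^H X_J)^{−1} (X_J)^H (well defined since (X_J)^H X_J is invertible). Then the spectral norm of the 1×|Ω\J| matrix X(j)^H (I − P_J) X_{Ω\J} satisfies ‖X(j)^H (I − P_J) X_{Ω\J}‖ ≤ δ_{s+1}/(1 − δ_s). -/

import Mathlib

open Matrix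

/-- `X` satisfies the restricted isometry property (RIP) of order `k` with
constant `δ ∈ [0,1)`: for every `k`-sparse vector `h`,
`(1−δ)‖h‖² ≤ ‖Xh‖² ≤ (1+δ)‖h‖²` (Euclidean norms). -/
def RIP {T M : ℕ} (X : Matrix (Fin T) (Fin M) ℂ) (k : ℕ) (δ : ℝ) : Prop :=
  0 ≤ δ ∧ δ < 1 ∧
    ∀ h : Fin M → ℂ, (Finset.univ.filter fun i => h i ≠ 0).card ≤ k →
      (1 - δ) * ∑ i, ‖h i‖ ^ 2 ≤ ∑ j, ‖X.mulVec h j‖ ^ 2 ∧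
        ∑ j, ‖X.mulVec h j‖ ^ 2 ≤ (1 + δ) * ∑ i, ‖h i‖ ^ 2

/-- Spectral norm (largest singular value) of a complex matrix, realized as the
operator norm of the induced linear map between Euclidean spaces. -/
noncomputable def specNorm {m n : Type*} [Fintype m] [Fintype n] [DecidableEq n]
    (A : Matrix m n ℂ) : ℝ :=
  ‖LinearMap.toContinuousLinearMap (Matrix.toEuclideanLin A)‖

/-- Submatrix of `X` formed by the columns indexed by the set `J`. -/
def cols {T M : ℕ} (X : Matrix (Fin T) (Fin M) ℂ) (J : Finset (Fin M)) :
    Matrix (Fin T) J ℂ :=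
  X.submatrix id (fun j => (j : Fin M))


/-- The `j`-th column of `X`, viewed as a `T × 1` matrix. -/
def col1 {T M : ℕ} (X : Matrix (Fin T) (Fin M) ℂ) (j : Fin M) :
    Matrix (Fin T) (Fin 1) ℂ :=
  fun t _ => X t j

/-- The orthogonal projection `P_J = X_J ((X_J)ᴴ X_J)⁻¹ (X_J)ᴴ` onto the column
span of `X_J`. -/
noncomputable def projMat {T M : ℕ} (X : Matrix (Fin T) (Fin M) ℂ)
    (J : Finset (Fin M)) : Matrix (Fin T) (Fin T) ℂ :=
  cols X J * ((cols X J)ᴴ * cols X J)⁻¹ * (cols X J)ᴴ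


/-- Extension by zero of a vector indexed by `K`. -/
noncomputable def extZ {M : ℕ} (K : Finset (Fin M)) (f : K → ℂ) : Fin M → ℂ :=
  fun i => if h : i ∈ K then f ⟨i, h⟩ else 0

lemma sum_extZ {M : ℕ} (K : Finset (Fin M)) (f : K → ℂ) (g : Fin M → ℂ → ℝ)
    (hg : ∀ i, g i 0 = 0) : ∑ i, g i (extZ K f i) = ∑ i : K, g i (f i) := by
  rw [← Finset.sum_subset (Finset.subset_univ K), ← Finset.sum_coe_sort K]
  · refine Finset.sum_congr rfl fun i _ => ?_
    simp [extZ]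
  · intro i _ hi
    simp [extZ, hi, hg]

lemma mulVec_extZ {T M : ℕ} (X : Matrix (Fin T) (Fin M) ℂ) (K : Finset (Fin M)) (f : K → ℂ) :
    X *ᵥ extZ K f = cols X K *ᵥ f := by
  ext t
  simp only [Matrix.mulVec, dotProduct]
  rw [← Finset.sum_subset (Finset.subset_univ K), ← Finset.sum_coe_sort K]
  · refine Finset.sum_congr rfl fun i _ => ?_
    simp [extZ, cols]
  · intro i _ hi
    simp [extZ, hi]

lemma RIP.norm {T M : ℕ} {X : Matrix (Fin T) (Fin M) ℂ} {k : ℕ} {δ : ℝ} (h : RIP X k δ)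
    (K : Finset (Fin M)) (hK : K.card ≤ k) (u : Fin M → ℂ) (hu : ∀ i, i ∉ K → u i = 0) :
    (1 - δ) * ‖WithLp.toLp 2 u‖ ^ 2 ≤ ‖WithLp.toLp 2 (X *ᵥ u)‖ ^ 2 ∧
      ‖WithLp.toLp 2 (X *ᵥ u)‖ ^ 2 ≤ (1 + δ) * ‖WithLp.toLp 2 u‖ ^ 2 := by
  have := h.2.2 u (le_trans (Finset.card_le_card (fun i hi => by
    by_contra hc
    simp [hu i hc] at hi)) hK)
  simpa [EuclideanSpace.norm_sq_eq] using this

lemma RIP.inner_le {T M : ℕ} {X : Matrix (Fin T) (Fin M) ℂ} {s : ℕ} {δ : ℝ}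
    (h : RIP X (s + 1) δ) (K : Finset (Fin M)) (hK : K.card ≤ s) (u : Fin M → ℂ)
    (hu : ∀ i, i ∉ K → u i = 0) (j : Fin M) (hj : j ∉ K) :
    ‖inner ℂ (WithLp.toLp 2 (fun t => X t j)) (WithLp.toLp 2 (X *ᵥ u))‖
      ≤ δ * ‖WithLp.toLp 2 u‖ := by
  set c := inner ℂ (WithLp.toLp 2 (fun t => X t j)) (WithLp.toLp 2 (X *ᵥ u)) with hc
  set n := ‖WithLp.toLp 2 u‖ with hn
  rcases eq_or_ne c 0 with h0 | h0
  · rw [h0, norm_zero]; exact mul_nonneg h.1 (norm_nonneg _)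
  have hn0 : 0 ≤ n := norm_nonneg _
  rcases eq_or_lt_of_le hn0 with hz | hpos
  · exfalso
    apply h0
    have : u = 0 := by
      have := norm_eq_zero.mp (hz.symm.trans rfl : ‖WithLp.toLp 2 u‖ = 0)
      simpa using this
    rw [hc, this]; simp
  -- the phase
  set p : ℂ := (n : ℂ) * (c / (‖c‖ : ℂ)) with hp
  have hcn : (‖c‖ : ℂ) ≠ 0 := by simpa using h0
  have hpn : ‖p‖ = n := by
    rw [hp, norm_mul, norm_div]; simp [abs_of_nonneg hn0, h0]
  set a : Fin M → ℂ := Pi.single j p with ha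
  have hXa : WithLp.toLp 2 (X *ᵥ a) = p • WithLp.toLp 2 (fun t => X t j) := by
    ext t; simp [ha, mul_comm]
  have hna : ‖WithLp.toLp 2 a‖ = n := by
    rw [ha, ← hpn]; simp
  have horth : inner ℂ (WithLp.toLp 2 a) (WithLp.toLp 2 u) = 0 := by
    rw [EuclideanSpace.inner_toLp_toLp, ha]
    simp [dotProduct, Pi.single_apply, apply_ite, hu j hj]
  have hip : inner ℂ (WithLp.toLp 2 (X *ᵥ a)) (WithLp.toLp 2 (X *ᵥ u)) = ((n * ‖c‖ : ℝ) : ℂ) := by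
    rw [hXa, inner_smul_left, ← hc, hp]
    simp only [map_mul, map_div₀, Complex.conj_ofReal]
    have : (starRingEnd ℂ) c * c = (‖c‖ : ℂ) ^ 2 := Complex.conj_mul' c
    push_cast
    field_simp
    linear_combination (n : ℂ) * this
  have hcard : (insert j K).card ≤ s + 1 := (Finset.card_insert_le _ _).trans (by omega)
  have hs1 := (h.norm (insert j K) hcard (a + u) (fun i hi => by
    simp only [Finset.mem_insert, not_or] at hi
    simp [ha, hi.1, hu i hi.2])).2
  have hs2 := (h.norm (insert j K) hcard (a - u) (fun i hi => by
    simp only [Finset.mem_insert, not_or] at hi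
    simp [ha, hi.1, hu i hi.2])).1
  rw [Matrix.mulVec_add, WithLp.toLp_add, WithLp.toLp_add, @norm_add_sq ℂ, @norm_add_sq ℂ, hip,
    horth, hna, ← hn] at hs1
  rw [Matrix.mulVec_sub, WithLp.toLp_sub, WithLp.toLp_sub, @norm_sub_sq ℂ, @norm_sub_sq ℂ, hip,
    horth, hna, ← hn] at hs2
  simp only [RCLike.re_to_complex, Complex.ofReal_re, Complex.zero_re] at hs1 hs2
  have : n * ‖c‖ ≤ n * (δ * n) := by nlinarith
  exact le_of_mul_le_mul_left this hpos

/-- Inequality (derivation_4) in Appendix B: if `X` satisfies the RIP of orders `s`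
and `s+1` with constants `δ_s, δ_{s+1} ∈ [0,1)`, `|Ω| ≤ s`, `J ⊆ Ω` and
`j ∉ Ω`, then `‖X(j)ᴴ (I − P_J) X_{Ω\J}‖ ≤ δ_{s+1}/(1 − δ_s)`, the Gram matrix
`(X_J)ᴴ X_J` being invertible so that `P_J` is well defined. -/
theorem specNorm_col_proj_le
    {T M : ℕ} (X : Matrix (Fin T) (Fin M) ℂ) (s : ℕ) (δs δs1 : ℝ)
    (hXs : RIP X s δs) (hXs1 : RIP X (s + 1) δs1)
    (Ω J : Finset (Fin M)) (hΩ : Ω.card ≤ s) (hJ : J ⊆ Ω)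
    (j : Fin M) (hj : j ∉ Ω) :
    IsUnit ((cols X J)ᴴ * cols X J) ∧
      specNorm ((col1 X j)ᴴ * ((1 : Matrix (Fin T) (Fin T) ℂ) - projMat X J) *
          cols X (Ω \ J)) ≤ δs1 / (1 - δs) := by
  have hJs : J.card ≤ s := (Finset.card_le_card hJ).trans hΩ
  have hδ0 := hXs.1
  have hδ1 := hXs.2.1
  have hU : IsUnit ((cols X J)ᴴ * cols X J) := by
    rw [← Matrix.mulVec_injective_iff_isUnit]
    intro x y hxy
    have h1 : ((cols X J)ᴴ * cols X J) *ᵥ (x - y) = 0 := by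
      rw [Matrix.mulVec_sub]; exact sub_eq_zero.mpr hxy
    open ComplexOrder in rw [Matrix.conjTranspose_mul_self_mulVec_eq_zero] at h1
    have h2 := (hXs.norm J hJs (extZ J (x - y)) (fun i hi => by simp [extZ, hi])).1
    rw [mulVec_extZ, h1] at h2
    have h3 : ‖WithLp.toLp 2 (extZ J (x - y))‖ ^ 2 ≤ 0 := by
      simp only [WithLp.toLp_zero, norm_zero] at h2
      nlinarith [sq_nonneg ‖WithLp.toLp 2 (extZ J (x - y))‖]
    have h4 : extZ J (x - y) = 0 := by
      have := norm_eq_zero.mp (pow_eq_zero_iff (two_ne_zero) |>.mp (le_antisymm h3 (sq_nonneg _)))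
      simpa using this
    ext i
    have := congrFun h4 i
    simp [extZ] at this
    exact sub_eq_zero.mp this
  refine ⟨hU, ?_⟩
  have hC : 0 ≤ δs1 / (1 - δs) := div_nonneg hXs1.1 (by linarith)
  refine ContinuousLinearMap.opNorm_le_bound _ hC fun v => ?_
  obtain ⟨v, rfl⟩ : ∃ w, v = WithLp.toLp 2 w := ⟨v.ofLp, rfl⟩
  set G := (cols X J)ᴴ * cols X J with hG
  set z : J → ℂ := G⁻¹ *ᵥ ((cols X J)ᴴ *ᵥ (cols X (Ω \ J) *ᵥ v)) with hz
  set u : Fin M → ℂ := extZ (Ω \ J) v - extZ J z with hu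
  have husupp : ∀ i, i ∉ Ω → u i = 0 := by
    intro i hi
    have : i ∉ J := fun h => hi (hJ h)
    simp [hu, extZ, hi, this]
  have hXu : X *ᵥ u = cols X (Ω \ J) *ᵥ v - cols X J *ᵥ z := by
    rw [hu, Matrix.mulVec_sub, mulVec_extZ, mulVec_extZ]
  have hXu2 : X *ᵥ u = (1 - projMat X J) *ᵥ (cols X (Ω \ J) *ᵥ v) := by
    rw [hXu, hz, projMat, Matrix.sub_mulVec, Matrix.one_mulVec]
    simp only [Matrix.mulVec_mulVec, Matrix.mul_assoc, hG]
  have horth : (cols X J)ᴴ *ᵥ (X *ᵥ u) = 0 := by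
    rw [hXu, Matrix.mulVec_sub, Matrix.mulVec_mulVec z, ← hG, hz, Matrix.mulVec_mulVec _ G G⁻¹,
      Matrix.mul_nonsing_inv _ ((Matrix.isUnit_iff_isUnit_det _).mp hU), Matrix.one_mulVec, sub_self]
  have hin : inner ℂ (WithLp.toLp 2 (cols X J *ᵥ z)) (WithLp.toLp 2 (X *ᵥ u)) = 0 := by
    rw [EuclideanSpace.inner_toLp_toLp, Matrix.star_mulVec, dotProduct_comm,
      ← Matrix.dotProduct_mulVec, horth, dotProduct_zero]
  have hle : ‖WithLp.toLp 2 (X *ᵥ u)‖ ^ 2 ≤ ‖WithLp.toLp 2 (cols X (Ω \ J) *ᵥ v)‖ ^ 2 := by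
    have e : WithLp.toLp 2 (cols X (Ω \ J) *ᵥ v)
        = WithLp.toLp 2 (cols X J *ᵥ z) + WithLp.toLp 2 (X *ᵥ u) := by
      rw [hXu, ← WithLp.toLp_add]; congr 1; abel
    rw [e, @norm_add_sq ℂ, hin]
    simp
  have hnv : ‖WithLp.toLp 2 (extZ (Ω \ J) v)‖ ^ 2 = ‖WithLp.toLp 2 v‖ ^ 2 := by
    rw [EuclideanSpace.norm_sq_eq, EuclideanSpace.norm_sq_eq]
    exact sum_extZ (Ω \ J) v (fun _ x => ‖x‖ ^ 2) (by simp)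
  have h1 := (hXs.norm Ω hΩ u husupp).1
  have h2 := (hXs.norm (Ω \ J) ((Finset.card_le_card Finset.sdiff_subset).trans hΩ)
    (extZ (Ω \ J) v) (fun i hi => by simp only [extZ, hi, dite_false])).2
  rw [mulVec_extZ, hnv] at h2
  have h3 : (1 - δs) * ‖WithLp.toLp 2 u‖ ≤ ‖WithLp.toLp 2 v‖ := by
    refine le_of_sq_le_sq ?_ (norm_nonneg _)
    have h5 : (1 - δs) * ‖WithLp.toLp 2 u‖ ^ 2 ≤ (1 + δs) * ‖WithLp.toLp 2 v‖ ^ 2 := by linarith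
    have h6 := mul_le_mul_of_nonneg_left h5 (by linarith : 0 ≤ 1 - δs)
    nlinarith [mul_nonneg (sq_nonneg δs) (sq_nonneg ‖WithLp.toLp 2 v‖)]
  have h4 := hXs1.inner_le Ω hΩ u husupp j hj
  have h7 : ‖(LinearMap.toContinuousLinearMap (Matrix.toEuclideanLin
      ((col1 X j)ᴴ * (1 - projMat X J) * cols X (Ω \ J)))) (WithLp.toLp 2 v)‖
      = ‖inner ℂ (WithLp.toLp 2 (fun t => X t j)) (WithLp.toLp 2 (X *ᵥ u))‖ := by
    rw [LinearMap.coe_toContinuousLinearMap', Matrix.toLpLin_toLp, EuclideanSpace.norm_eq]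
    rw [Matrix.toLin'_apply, ← Matrix.mulVec_mulVec, ← Matrix.mulVec_mulVec, ← hXu2, EuclideanSpace.inner_toLp_toLp]
    simp [Matrix.mulVec, dotProduct, col1, mul_comm]
  rw [h7]
  refine h4.trans ?_
  rw [div_mul_eq_mul_div, le_div_iff₀ (by linarith)]
  nlinarith [mul_le_mul_of_nonneg_left h3 hXs1.1]
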